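/- arXiv:2104.05962 — 6 statements merged into one kernel-verified Lean document; each statement's English description precedes it below -/
import Mathlib

section
/- (Hales–Jewett theorem, subspace form) For every positive integer m and all finite non-empty sets Λ (the alphabet) and C (the colors), there exists a positive integer k such that for every finite linear order M of size k and every coloring d: U_{M,Λ} → C there exists a d-monochromatic m-dimensional subspace of U_{M,Λ}. The minimal such k is denoted hj_C(m,Λ). -/
open Finset

/-- `ν` belongs to the subspace `S(⟨Ms ℓ : ℓ < m⟩, ρ)` of `U_{Fin k, Λ}`: it agrees with `ρ`
off the blocks and is constant on each block `Ms ℓ`. -/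
def InSubspace {Λ : Type*} {k m : ℕ} (Ms : Fin m → Finset (Fin k))
    (ρ : Fin k → Λ) (ν : Fin k → Λ) : Prop :=
  (∀ t : Fin k, (∀ ℓ, t ∉ Ms ℓ) → ν t = ρ t) ∧
    ∀ ℓ : Fin m, ∃ a : Λ, ∀ t ∈ Ms ℓ, ν t = a

/-- The number of blocks `Ms ℓ` on which `ν` is constantly `α`. -/
def blockCount {Λ : Type*} [DecidableEq Λ] {k m : ℕ} (Ms : Fin m → Finset (Fin k))
    (ν : Fin k → Λ) (α : Λ) : ℕ :=
  (Finset.univ.filter fun ℓ : Fin m => ∀ t ∈ Ms ℓ, ν t = α).card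

/-- `k` is large enough for the `m`-dimensional Hales-Jewett property: every `C`-coloring of
`U_{Fin k, Λ}` admits a monochromatic `m`-dimensional subspace. -/
def HJProp (Λ C : Type*) (m k : ℕ) : Prop :=
  ∀ d : (Fin k → Λ) → C,
    ∃ (Ms : Fin m → Finset (Fin k)) (ρ : Fin k → Λ),
      (∀ ℓ, (Ms ℓ).Nonempty) ∧
      (∀ ℓ₁ ℓ₂, ℓ₁ ≠ ℓ₂ → Disjoint (Ms ℓ₁) (Ms ℓ₂)) ∧
      ∃ c : C, ∀ ν, InSubspace Ms ρ ν → d ν = c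

/-- The Hales-Jewett number `hj_C(m, Λ)`. -/
noncomputable def hjNum (Λ C : Type*) (m : ℕ) : ℕ := sInf {k | HJProp Λ C m k}

/-- Like `HJProp`, but the blocks of the monochromatic subspace all have the same size. -/
def HJEqProp (Λ C : Type*) (m k : ℕ) : Prop :=
  ∀ d : (Fin k → Λ) → C,
    ∃ (Ms : Fin m → Finset (Fin k)) (ρ : Fin k → Λ),
      (∀ ℓ, (Ms ℓ).Nonempty) ∧
      (∀ ℓ₁ ℓ₂, ℓ₁ ≠ ℓ₂ → Disjoint (Ms ℓ₁) (Ms ℓ₂)) ∧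
      (∀ ℓ₁ ℓ₂, (Ms ℓ₁).card = (Ms ℓ₂).card) ∧
      ∃ c : C, ∀ ν, InSubspace Ms ρ ν → d ν = c

/-- The number `hj^=_C(m, Λ)`. -/
noncomputable def hjEqNum (Λ C : Type*) (m : ℕ) : ℕ := sInf {k | HJEqProp Λ C m k}

/-- The partition property underlying `f^8_Λ(m, C)`: `d` is constant on the set of members
`ν` of the subspace realizing each letter `α` on exactly `m / |Λ|` many blocks. -/
def F8Prop (Λ C : Type*) [Fintype Λ] [DecidableEq Λ] (m k : ℕ) : Prop :=
  ∀ d : (Fin k → Λ) → C,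
    ∃ (Ms : Fin m → Finset (Fin k)) (ρ : Fin k → Λ),
      (∀ ℓ, (Ms ℓ).Nonempty) ∧
      (∀ ℓ₁ ℓ₂, ℓ₁ ≠ ℓ₂ → Disjoint (Ms ℓ₁) (Ms ℓ₂)) ∧
      ∃ c : C, ∀ ν, InSubspace Ms ρ ν →
        (∀ α : Λ, blockCount Ms ν α = m / Fintype.card Λ) → d ν = c

/-- Shelah's number `f^8_Λ(m, C)`. -/
noncomputable def f8 (Λ C : Type*) [Fintype Λ] [DecidableEq Λ] (m : ℕ) : ℕ :=
  sInf {k | F8Prop Λ C m k}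

/-- As `F8Prop`, but with all blocks of the same size. -/
def F9Prop (Λ C : Type*) [Fintype Λ] [DecidableEq Λ] (m k : ℕ) : Prop :=
  ∀ d : (Fin k → Λ) → C,
    ∃ (Ms : Fin m → Finset (Fin k)) (ρ : Fin k → Λ),
      (∀ ℓ, (Ms ℓ).Nonempty) ∧
      (∀ ℓ₁ ℓ₂, ℓ₁ ≠ ℓ₂ → Disjoint (Ms ℓ₁) (Ms ℓ₂)) ∧
      (∀ ℓ₁ ℓ₂, (Ms ℓ₁).card = (Ms ℓ₂).card) ∧
      ∃ c : C, ∀ ν, InSubspace Ms ρ ν →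
        (∀ α : Λ, blockCount Ms ν α = m / Fintype.card Λ) → d ν = c

/-- Shelah's number `f^9_Λ(m, C)`: the minimal `k` divisible by `|Λ|` with `F9Prop`. -/
noncomputable def f9 (Λ C : Type*) [Fintype Λ] [DecidableEq Λ] (m : ℕ) : ℕ :=
  sInf {k | Fintype.card Λ ∣ k ∧ F9Prop Λ C m k}

/-- The partition property underlying `f^{8,*}_Λ(m, C)`: any two members of the subspace
realizing each letter on the same number of blocks get the same color. -/
def F8StarProp (Λ C : Type*) [DecidableEq Λ] (m k : ℕ) : Prop :=
  ∀ d : (Fin k → Λ) → C,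
    ∃ (Ms : Fin m → Finset (Fin k)) (ρ : Fin k → Λ),
      (∀ ℓ, (Ms ℓ).Nonempty) ∧
      (∀ ℓ₁ ℓ₂, ℓ₁ ≠ ℓ₂ → Disjoint (Ms ℓ₁) (Ms ℓ₂)) ∧
      ∀ ν₁ ν₂, InSubspace Ms ρ ν₁ → InSubspace Ms ρ ν₂ →
        (∀ α : Λ, blockCount Ms ν₁ α = blockCount Ms ν₂ α) → d ν₁ = d ν₂

/-- Shelah's number `f^{8,*}_Λ(m, C)`. -/
noncomputable def f8Star (Λ C : Type*) [DecidableEq Λ] (m : ℕ) : ℕ :=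
  sInf {k | F8StarProp Λ C m k}

/-- As `F8StarProp`, but with all blocks of the same size. -/
def F9StarProp (Λ C : Type*) [DecidableEq Λ] (m k : ℕ) : Prop :=
  ∀ d : (Fin k → Λ) → C,
    ∃ (Ms : Fin m → Finset (Fin k)) (ρ : Fin k → Λ),
      (∀ ℓ, (Ms ℓ).Nonempty) ∧
      (∀ ℓ₁ ℓ₂, ℓ₁ ≠ ℓ₂ → Disjoint (Ms ℓ₁) (Ms ℓ₂)) ∧
      (∀ ℓ₁ ℓ₂, (Ms ℓ₁).card = (Ms ℓ₂).card) ∧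
      ∀ ν₁ ν₂, InSubspace Ms ρ ν₁ → InSubspace Ms ρ ν₂ →
        (∀ α : Λ, blockCount Ms ν₁ α = blockCount Ms ν₂ α) → d ν₁ = d ν₂

/-- Shelah's number `f^{9,*}_Λ(m, C)`: the minimal `k` divisible by `|Λ|` with `F9StarProp`. -/
noncomputable def f9Star (Λ C : Type*) [Fintype Λ] [DecidableEq Λ] (m : ℕ) : ℕ :=
  sInf {k | Fintype.card Λ ∣ k ∧ F9StarProp Λ C m k}

/-- As `F9StarProp`, but with all blocks of size exactly `n`. -/
def F9StarFixedProp (Λ C : Type*) [DecidableEq Λ] (n m k : ℕ) : Prop :=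
  ∀ d : (Fin k → Λ) → C,
    ∃ (Ms : Fin m → Finset (Fin k)) (ρ : Fin k → Λ),
      (∀ ℓ, (Ms ℓ).card = n) ∧
      (∀ ℓ₁ ℓ₂, ℓ₁ ≠ ℓ₂ → Disjoint (Ms ℓ₁) (Ms ℓ₂)) ∧
      ∀ ν₁ ν₂, InSubspace Ms ρ ν₁ → InSubspace Ms ρ ν₂ →
        (∀ α : Λ, blockCount Ms ν₁ α = blockCount Ms ν₂ α) → d ν₁ = d ν₂

/-- Shelah's number `f^{9,*}_{Λ,n}(m, C)`. -/
noncomputable def f9StarFixed (Λ C : Type*) [Fintype Λ] [DecidableEq Λ] (n m : ℕ) : ℕ :=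
  sInf {k | Fintype.card Λ ∣ k ∧ F9StarFixedProp Λ C n m k}

/-- The partition property underlying `f^{13}_Λ(m, C)`: there is an `m`-element set `N` and
`ρ` on its complement such that any two extensions of `ρ` realizing each letter equally often
on `N` get the same color. -/
def F13Prop (Λ C : Type*) [DecidableEq Λ] (m k : ℕ) : Prop :=
  ∀ d : (Fin k → Λ) → C,
    ∃ N : Finset (Fin k), N.card = m ∧
      ∃ ρ : Fin k → Λ, ∀ η₁ η₂ : Fin k → Λ,
        (∀ t ∉ N, η₁ t = ρ t) → (∀ t ∉ N, η₂ t = ρ t) →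
        (∀ α : Λ, (N.filter fun t => η₁ t = α).card = (N.filter fun t => η₂ t = α).card) →
        d η₁ = d η₂

/-- The number `f^{13}_Λ(m, C)` of Golshani-Shelah. -/
noncomputable def f13 (Λ C : Type*) [DecidableEq Λ] (m : ℕ) : ℕ :=
  sInf {k | F13Prop Λ C m k}

/-- The Gallai-Witt property: every `C`-coloring of `U_{h,n}` (the `h`-tuples of numbers
below `n`) is constant on a homothetic copy `{⟨m_e + d'⬝i_e : e < h⟩ : i_0, …, i_{h-1} ≤ m}`
of the cube `{0, …, m}^h`. -/
def GWProp (C : Type*) (h m n : ℕ) : Prop :=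
  ∀ d : (Fin h → Fin n) → C,
    ∃ d' : ℕ, 0 < d' ∧ ∃ ms : Fin h → ℕ,
      (∀ e, ms e + d' * m < n) ∧
      ∃ c : C, ∀ i : Fin h → ℕ, (∀ e, i e ≤ m) →
        ∀ hlt : ∀ e, ms e + d' * i e < n,
          d (fun e => ⟨ms e + d' * i e, hlt e⟩) = c

/-- The Gallai-Witt number `w_C(h, m)`. -/
noncomputable def gwNum (C : Type*) (h m : ℕ) : ℕ := sInf {n | GWProp C h m n}

/-- The van der Waerden property: every coloring of `{0, …, N-1}` with `r` colors contains a
monochromatic arithmetic progression of length `m` (with positive common difference). -/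
def VDWProp (r m N : ℕ) : Prop :=
  ∀ d : Fin N → Fin r,
    ∃ a dd : ℕ, 0 < dd ∧ (∀ i < m, a + i * dd < N) ∧
      ∃ c : Fin r, ∀ i : ℕ, i < m → ∀ h : a + i * dd < N, d ⟨a + i * dd, h⟩ = c

/-- The van der Waerden number `w(r, m)`. -/
noncomputable def vdwNum (r m : ℕ) : ℕ := sInf {N | VDWProp r m N}

/-- The coloring `d` of `U_{Fin k, Λ}` admits a monochromatic (combinatorial) line. -/
def HasMonoLine {Λ C : Type*} {k : ℕ} (d : (Fin k → Λ) → C) : Prop :=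
  ∃ N : Finset (Fin k), N.Nonempty ∧ ∃ ρ : Fin k → Λ, ∃ c : C,
    ∀ η : Fin k → Λ, (∀ t ∉ N, η t = ρ t) → (∃ a : Λ, ∀ t ∈ N, η t = a) → d η = c

/-- Property `(⊕)` for `m*`: for every `C`-coloring `d` of
`Ω = {⟨ℓ_α : α ∈ Λ⟩ : Σ_α ℓ_α = m*}` there are `ℓ* > 0` and `⟨ℓ*_α : α ∈ Λ⟩` such that all the
tuples `ℓ̄^α` (obtained from `⟨ℓ*_β⟩` by increasing the `α`-entry by `ℓ*`) lie in `Ω` and get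
the same color. -/
def OplusProp (Λ C : Type*) [Fintype Λ] [DecidableEq Λ] (mstar : ℕ) : Prop :=
  ∀ d : (Λ → ℕ) → C,
    ∃ lstar : ℕ, 0 < lstar ∧ ∃ ls : Λ → ℕ,
      (∀ α : Λ, (∑ β : Λ, Function.update ls α (ls α + lstar) β) = mstar) ∧
      ∃ c : C, ∀ α : Λ, d (Function.update ls α (ls α + lstar)) = c

/-!
A monochromatic line over the alphabet `Λ^m` unfolds to a monochromatic `m`-dimensional subspace
over `Λ`; this is Mathlib's multidimensional Hales-Jewett theorem, in which a subspace is a word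
over letters and directions, every direction occurring. The positions of a direction form a block.
The remaining positions carry fixed letters, so any single point of the subspace can serve as `ρ`:
a word agreeing with it off the blocks and constant on each block is again a point of the subspace.
-/

section SubspaceBlock

variable {η α ι : Type*} [Fintype ι] {l : Combinatorics.Subspace η α ι}

open Classical in
/-- The block of a combinatorial subspace in direction `e`: the coordinates that vary with `e`.
These are the sets `Ms ℓ` of `InSubspace`, with the directions as the indices `ℓ`. -/
noncomputable def subspaceBlock (l : Combinatorics.Subspace η α ι) (e : η) : Finset ι :=
  {i | l.idxFun i = Sum.inr e}

theorem mem_subspaceBlock {e : η} {i : ι} : i ∈ subspaceBlock l e ↔ l.idxFun i = Sum.inr e := by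
  simp [subspaceBlock]

theorem subspaceBlock_nonempty (l : Combinatorics.Subspace η α ι) (e : η) :
    (subspaceBlock l e).Nonempty :=
  (l.proper e).imp fun _ => mem_subspaceBlock.mpr

theorem disjoint_subspaceBlock (l : Combinatorics.Subspace η α ι) {e₁ e₂ : η} (he : e₁ ≠ e₂) :
    Disjoint (subspaceBlock l e₁) (subspaceBlock l e₂) := by
  refine Finset.disjoint_left.mpr fun i h₁ h₂ => he ?_
  rw [mem_subspaceBlock] at h₁ h₂
  exact Sum.inr_injective (h₁.symm.trans h₂)

theorem eq_subspace_apply_iff (y : η → α) {x : η → α} {ν : ι → α} :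
    ν = l x ↔ (∀ i, (∀ e, i ∉ subspaceBlock l e) → ν i = l y i) ∧
      ∀ e, ∀ i ∈ subspaceBlock l e, ν i = x e := by
  simp only [mem_subspaceBlock]
  constructor
  · rintro rfl
    refine ⟨fun i hi => ?_, fun e i hi => l.apply_inr hi⟩
    cases h : l.idxFun i with
    | inl a => rw [l.apply_inl h, l.apply_inl h]
    | inr e => exact absurd h (hi e)
  · rintro ⟨off_blocks, on_blocks⟩
    funext i
    cases h : l.idxFun i with
    | inl a => rw [off_blocks i (by simp [h]), l.apply_inl h, l.apply_inl h]
    | inr e => rw [on_blocks e i h, l.apply_inr h]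

end SubspaceBlock

section HJProp

variable {Λ C : Type*} {m k : ℕ}

theorem inSubspace_subspaceBlock_iff {l : Combinatorics.Subspace (Fin m) Λ (Fin k)}
    (y : Fin m → Λ) {ν : Fin k → Λ} :
    InSubspace (subspaceBlock l) (l y) ν ↔ ∃ x, ν = l x := by
  simp only [InSubspace, eq_subspace_apply_iff y, exists_and_left, Classical.skolem]

theorem hjProp_of_forall_exists_isMono [Nonempty Λ]
    (h : ∀ d : (Fin k → Λ) → C, ∃ l : Combinatorics.Subspace (Fin m) Λ (Fin k), l.IsMono d) :
    HJProp Λ C m k := by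
  intro d
  obtain ⟨l, c, hc⟩ := h d
  let y : Fin m → Λ := fun _ => Classical.arbitrary Λ
  refine ⟨subspaceBlock l, l y, subspaceBlock_nonempty l, fun _ _ => disjoint_subspaceBlock l,
    c, fun ν hν => ?_⟩
  obtain ⟨x, rfl⟩ := (inSubspace_subspaceBlock_iff y).mp hν
  exact hc x

end HJProp

/-- **Hales-Jewett theorem** (subspace form): for every positive `m` and finite non-empty
alphabet `Λ` and color set `C` there is a positive `k` such that every `C`-coloring of
`U_{M,Λ}`, for `M` a linear order of size `k`, has a monochromatic `m`-dimensional subspace. -/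
theorem halesJewett_subspace (Λ C : Type*) [Fintype Λ] [Nonempty Λ]
    [Fintype C] [Nonempty C] (m : ℕ) (hm : 0 < m) :
    ∃ k : ℕ, 0 < k ∧ HJProp Λ C m k := by
  obtain ⟨k, hk⟩ := Combinatorics.Subspace.exists_mono_in_high_dimension_fin Λ C (Fin m)
  refine ⟨k, ?_, hjProp_of_forall_exists_isMono hk⟩
  obtain ⟨l, -⟩ := hk fun _ => Classical.arbitrary C
  obtain ⟨i, -⟩ := l.proper ⟨0, hm⟩
  exact i.pos
end

section
/- (Van der Waerden's theorem) For all positive integers r and n there exists a least positive integer w(r,n) such that every coloring of {1, …, w(r,n)} with r colors contains a monochromatic arithmetic progression of length n. -/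
open Finset

/-!
Colour the cube `ι → S` by the colour of the sum of the coordinates. Along a combinatorial line
the sum is `a • s + b`, where `a > 0` is the number of moving coordinates, so a monochromatic line
gives a monochromatic homothetic copy of `S`. Only the finitely many sums over the cube are
coloured, which makes the argument finitary without an appeal to compactness.
-/

theorem exists_sum_line_eq_nsmul_add {α ι M : Type*} [Fintype ι] [AddCommMonoid M]
    (l : Combinatorics.Line α ι) (f : α → M) :
    ∃ a > 0, ∃ b : M, ∀ x, ∑ i, f (l x i) = a • f x + b := by
  refine ⟨#{i | l.idxFun i = none}, ?_, ∑ i with l.idxFun i ≠ none, ((l.idxFun i).map f).getD 0,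
    fun x => ?_⟩
  · obtain ⟨i, hi⟩ := l.proper
    exact card_pos.mpr ⟨i, mem_filter.mpr ⟨mem_univ i, hi⟩⟩
  · have moving : ∑ i with l.idxFun i = none, f (l x i) = #{i | l.idxFun i = none} • f x :=
      sum_eq_card_nsmul fun i hi => by rw [l.apply_none x i (mem_filter.mp hi).2]
    have fixed : ∑ i with l.idxFun i ≠ none, f (l x i) =
        ∑ i with l.idxFun i ≠ none, ((l.idxFun i).map f).getD 0 := by
      refine sum_congr rfl fun i hi => ?_
      obtain ⟨y, hy⟩ := Option.ne_none_iff_exists'.mp (mem_filter.mp hi).2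
      simp only [Combinatorics.Line.apply_def, hy, Option.map_some, Option.getD_some]
    rw [← sum_filter_add_sum_filter_not univ (fun i => l.idxFun i = none), moving, fixed]

theorem exists_finset_exists_mono_homothetic_copy {M : Type*} [AddCommMonoid M] (S : Finset M)
    (κ : Type*) [Finite κ] :
    ∃ T : Finset M, ∀ C : T → κ, ∃ a > 0, ∃ (b : M) (c : κ),
      ∀ s ∈ S, ∃ h : a • s + b ∈ T, C ⟨a • s + b, h⟩ = c := by
  classical
  obtain ⟨ι, _, mono_line⟩ := Combinatorics.Line.exists_mono_in_high_dimension S κ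
  let coordSum (v : ι → S) : M := ∑ i, (v i : M)
  have coordSum_mem (v : ι → S) : coordSum v ∈ univ.image coordSum :=
    mem_image_of_mem coordSum (mem_univ v)
  refine ⟨univ.image coordSum, fun C => ?_⟩
  obtain ⟨l, c, hc⟩ := mono_line fun v => C ⟨coordSum v, coordSum_mem v⟩
  obtain ⟨a, ha, b, hab⟩ := exists_sum_line_eq_nsmul_add l ((↑) : S → M)
  refine ⟨a, ha, b, c, fun s hs => ?_⟩
  simp only [← hab ⟨s, hs⟩]
  exact ⟨coordSum_mem _, hc ⟨s, hs⟩⟩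

theorem exists_vdwProp (r m : ℕ) : ∃ N, VDWProp r m N := by
  obtain ⟨T, hT⟩ := exists_finset_exists_mono_homothetic_copy (range m) (Fin r)
  obtain ⟨N, hTN⟩ := T.exists_nat_subset_range
  refine ⟨N, fun d => ?_⟩
  obtain ⟨a, ha, b, c, hc⟩ := hT fun t => d ⟨t, mem_range.mp (hTN t.2)⟩
  have term_eq (i : ℕ) : b + i * a = a • i + b := by rw [smul_eq_mul, mul_comm, add_comm]
  refine ⟨b, a, ha, fun i hi => ?_, c, fun i hi h => ?_⟩
  · obtain ⟨hmem, -⟩ := hc i (mem_range.mpr hi)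
    exact term_eq i ▸ mem_range.mp (hTN hmem)
  · obtain ⟨_, hcolor⟩ := hc i (mem_range.mpr hi)
    simpa only [term_eq] using hcolor

theorem vdwProp_vdwNum (r m : ℕ) : VDWProp r m (vdwNum r m) :=
  Nat.sInf_mem (exists_vdwProp r m)

theorem VDWProp.pos {r m N : ℕ} (h : VDWProp r m N) (hm : 0 < m) : 0 < N := by
  refine Nat.pos_of_ne_zero ?_
  rintro rfl
  obtain ⟨_, _, -, hlt, -⟩ := h Fin.elim0
  exact Nat.not_lt_zero _ (hlt 0 hm)

/-- **Van der Waerden's theorem**: for all positive `r` and `n` there is a least positive `N`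
such that every `r`-coloring of a set of `N` integers contains a monochromatic `n`-term
arithmetic progression. -/
theorem vanDerWaerden (r n : ℕ) (hr : 0 < r) (hn : 0 < n) :
    ∃ N : ℕ, 0 < N ∧ VDWProp r n N ∧ ∀ N' : ℕ, 0 < N' → VDWProp r n N' → N ≤ N' := by
  have hw : VDWProp r n (vdwNum r n) := vdwProp_vdwNum r n
  exact ⟨vdwNum r n, hw.pos hn, hw, fun _ _ hN' => Nat.sInf_le hN'⟩
end

section
/- (Gallai–Witt theorem) For every positive integer h, every natural number m, and every finite non-empty set C of colors, there exists a least positive integer n = w_C(h,m) such that for every coloring d: U_{h,n} → C (where U_{h,n} is the set of functions from {0,…,h−1} to {0,…,n−1}, i.e. h-tuples of numbers below n) there exist an integer d' > 0 and a sequence ⟨m_e : e < h⟩ of natural numbers with m_e + d'·m < n for each e < h, such that d is constant on the set { ⟨m_e + d'·i_e : e < h⟩ : i_0 ≤ m, …, i_{h−1} ≤ m }. -/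
open Finset

/-!
Van der Waerden's theorem for homothetic copies of a finite set `S` follows from the Hales-Jewett
theorem by coloring a word with letters in `S` by the color of the sum of its letters: along a
combinatorial line with `a` moving coordinates this sum is `a • s + b`, where `b` is the sum of the
fixed letters. Since the length `N` of the words does not depend on the coloring, all copies so
found live in the `N`-fold sumset of `S`. For the cube `S = {0, …, m}^h` this sumset is the cube
`{0, …, N * m}^h`.
-/

section

open Combinatorics
open scoped Pointwise

theorem exists_sum_line_apply_eq {α ι M : Type*} [Fintype ι] [AddCommMonoid M]
    (l : Line α ι) (f : α → M) :
    ∃ a : ℕ, 0 < a ∧ a ≤ Fintype.card ι ∧ ∃ b ∈ (Fintype.card ι - a) • Set.range f,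
      ∀ x, ∑ i, f (l x i) = a • f x + b := by
  classical
  let moving : Finset ι := {i | l.idxFun i = none}
  let b : M := ∑ i ∈ movingᶜ, (l.idxFun i).elim 0 f
  have hmoving : 0 < #moving := by
    obtain ⟨i, hi⟩ := l.proper
    exact card_pos.2 ⟨i, by simpa [moving] using hi⟩
  have hb : b ∈ (Fintype.card ι - #moving) • Set.range f := by
    rw [← card_compl, ← sum_const]
    refine Set.finsetSum_mem_finsetSum _ _ _ fun i hi => ?_
    obtain ⟨y, hy⟩ := Option.ne_none_iff_exists'.1 (by simpa [moving] using hi)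
    simp [hy]
  refine ⟨#moving, hmoving, card_le_univ _, b, hb, fun x => ?_⟩
  rw [← sum_add_sum_compl moving, ← sum_const]
  congr 1
  · refine sum_congr rfl fun i hi => ?_
    rw [l.apply_none x i (by simpa [moving] using hi)]
  · refine sum_congr rfl fun i hi => ?_
    obtain ⟨y, hy⟩ := Option.ne_none_iff_exists'.1 (by simpa [moving] using hi)
    simp [hy]

theorem exists_bounded_mono_homothetic_copy {M : Type*} [AddCommMonoid M] (S : Finset M)
    (κ : Type*) [Finite κ] :
    ∃ N : ℕ, ∀ d : M → κ, ∃ a : ℕ, 0 < a ∧ a ≤ N ∧ ∃ b ∈ (N - a) • (S : Set M),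
      ∃ c : κ, ∀ s ∈ S, d (a • s + b) = c := by
  obtain ⟨ι, _, hι⟩ := Line.exists_mono_in_high_dimension S κ
  refine ⟨Fintype.card ι, fun d => ?_⟩
  obtain ⟨l, c, hl⟩ := hι fun v => d (∑ i, (v i : M))
  obtain ⟨a, ha, haN, b, hb, hsum⟩ := exists_sum_line_apply_eq l ((↑) : S → M)
  rw [Subtype.range_coe] at hb
  exact ⟨a, ha, haN, b, hb, c, fun s hs => by simpa only [hsum] using hl ⟨s, hs⟩⟩

theorem nsmul_mem_upperBounds_nsmul {M : Type*} [AddMonoid M] [Preorder M] [AddLeftMono M]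
    [AddRightMono M] {S : Set M} {t : M} (ht : t ∈ upperBounds S) (n : ℕ) :
    n • t ∈ upperBounds (n • S) := by
  induction n with
  | zero => simp [upperBounds]
  | succ n ih => simpa only [succ_nsmul] using add_mem_upperBounds_add ih ht

end

theorem exists_pos_gwProp (C : Type*) [Finite C] (h m : ℕ) : ∃ n : ℕ, 0 < n ∧ GWProp C h m n := by
  let cube : Finset (Fin h → ℕ) := Iic fun _ => m
  obtain ⟨N, hN⟩ := exists_bounded_mono_homothetic_copy cube C
  refine ⟨N * m + 1, Nat.succ_pos _, fun d => ?_⟩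
  -- Reducing modulo `N * m + 1` extends `d` to all of `ℕ^h`; the copy found stays in the range
  -- where this changes nothing.
  obtain ⟨a, ha, haN, b, hb, c, hc⟩ := hN fun x => d fun e => Fin.ofNat (N * m + 1) (x e)
  have hb_le (e : Fin h) : b e ≤ (N - a) * m := by
    have hm : (fun _ => m) ∈ upperBounds (cube : Set (Fin h → ℕ)) := fun x hx => mem_Iic.1 hx
    exact nsmul_mem_upperBounds_nsmul hm _ hb e
  refine ⟨a, ha, b, fun e => ?_, c, fun i hi hlt => ?_⟩
  · calc
      b e + a * m ≤ (N - a) * m + a * m := by gcongr; exact hb_le e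
      _ = N * m := by rw [← add_mul, Nat.sub_add_cancel haN]
      _ < N * m + 1 := Nat.lt_succ_self _
  · rw [← hc i (mem_Iic.2 hi)]
    congr 1 with e
    simp [add_comm (a * i e), Nat.mod_eq_of_lt (hlt e)]

/-- **Gallai-Witt theorem**: for every positive `h`, every `m`, and every finite non-empty
set `C` of colors, there is a least positive `n` with the Gallai-Witt property. -/
theorem gallaiWitt (C : Type*) [Fintype C] [Nonempty C] (h m : ℕ) (hh : 0 < h) :
    ∃ n : ℕ, 0 < n ∧ GWProp C h m n ∧ ∀ n' : ℕ, 0 < n' → GWProp C h m n' → n ≤ n' := by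
  classical
  have hex := exists_pos_gwProp C h m
  obtain ⟨hpos, hgw⟩ := Nat.find_spec hex
  exact ⟨Nat.find hex, hpos, hgw, fun n' hpos' hgw' => Nat.find_min' hex ⟨hpos', hgw'⟩⟩
end

section
/- For all finite non-empty sets Λ and C and every positive integer m divisible by |Λ|, f^{9,*}_Λ(m,C) ≤ m · hj_C(1, Λ^m), where Λ^m denotes the alphabet consisting of all m-tuples of elements of Λ. -/
open Finset

/-!
A word of length `k` over the alphabet `Λ^m` is an `m × k` matrix over `Λ`, that is, a word of
length `m * k` over `Λ`. A line over `Λ^m` is given by a nonempty set `N` of active columns, all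
holding the same letter. As this letter runs through `Λ^m`, its `m` entries vary independently, so
the line is an `m`-dimensional subspace over `Λ`. Its blocks are the copies of `N` in the `m` rows
and hence have the same size. A coloring that is constant on the line depends in particular only on
the letter counts.
-/

section HalesJewett

variable {A C : Type*} {m : ℕ}

theorem exists_forall_inSubspace_mem_range [Nonempty A] {k : ℕ}
    (l : Combinatorics.Subspace (Fin m) A (Fin k)) :
    ∃ (Ms : Fin m → Finset (Fin k)) (ρ : Fin k → A),
      (∀ ℓ, (Ms ℓ).Nonempty) ∧
      (∀ ℓ₁ ℓ₂, ℓ₁ ≠ ℓ₂ → Disjoint (Ms ℓ₁) (Ms ℓ₂)) ∧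
      ∀ ν, InSubspace Ms ρ ν → ν ∈ Set.range l := by
  classical
  refine ⟨fun ℓ => {t | l.idxFun t = Sum.inr ℓ},
    fun t => (l.idxFun t).elim id fun _ => Classical.arbitrary A,
    fun ℓ => ?nonempty, fun ℓ₁ ℓ₂ hne => ?disjoint, fun ν ⟨hfixed, hconst⟩ => ?range⟩
  case nonempty => simpa only [filter_nonempty_iff, mem_univ, true_and] using l.proper ℓ
  case disjoint =>
    exact disjoint_filter.2 fun t _ h₁ h₂ => hne (Sum.inr_injective (h₁.symm.trans h₂))
  case range =>
    choose x hx using hconst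
    refine ⟨x, funext fun t => ?_⟩
    cases ht : l.idxFun t with
    | inl a => simpa [l.apply_inl ht, ht] using (hfixed t (by simp [ht])).symm
    | inr ℓ => simpa [l.apply_inr ht] using (hx ℓ t (by simp [ht])).symm

variable (A C m)

theorem exists_hjProp [Finite A] [Nonempty A] [Finite C] : ∃ k, HJProp A C m k := by
  obtain ⟨k, hk⟩ := Combinatorics.Subspace.exists_mono_in_high_dimension_fin A C (Fin m)
  refine ⟨k, fun d => ?_⟩
  obtain ⟨l, c, hc⟩ := hk d
  obtain ⟨Ms, ρ, hMs, hdisj, hrange⟩ := exists_forall_inSubspace_mem_range l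
  refine ⟨Ms, ρ, hMs, hdisj, c, fun ν hν => ?_⟩
  obtain ⟨x, rfl⟩ := hrange ν hν
  exact hc x

theorem hjProp_hjNum [Finite A] [Nonempty A] [Finite C] : HJProp A C m (hjNum A C m) :=
  Nat.sInf_mem (exists_hjProp A C m)

end HalesJewett

theorem HJProp.hjEqProp_one {A C : Type*} {k : ℕ} (h : HJProp A C 1 k) : HJEqProp A C 1 k := by
  intro d
  obtain ⟨Ms, ρ, hMs, hdisj, hmono⟩ := h d
  exact ⟨Ms, ρ, hMs, hdisj, fun ℓ₁ ℓ₂ => by rw [Subsingleton.elim ℓ₁ ℓ₂], hmono⟩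

theorem HJEqProp.f9StarProp {Λ C : Type*} [DecidableEq Λ] {m k : ℕ} (h : HJEqProp Λ C m k) :
    F9StarProp Λ C m k := by
  intro d
  obtain ⟨Ms, ρ, hMs, hdisj, hcard, c, hc⟩ := h d
  exact ⟨Ms, ρ, hMs, hdisj, hcard, fun ν₁ ν₂ h₁ h₂ _ => (hc ν₁ h₁).trans (hc ν₂ h₂).symm⟩

section Flatten

variable {Λ : Type*} {m n k : ℕ}

/-- The identification of `U_{k, Λ^m}` with `U_{mk, Λ}`: the `m × k` matrix whose columns are the
letters of the word is read row by row. -/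
def flattenWord : (Fin k → Fin m → Λ) ≃ (Fin (m * k) → Λ) :=
  (Equiv.piComm _).trans <| (Equiv.curry _ _ _).symm.trans <|
    finProdFinEquiv.arrowCongr (Equiv.refl Λ)

@[simp]
theorem flattenWord_apply (v : Fin k → Fin m → Λ) (i : Fin m) (t : Fin k) :
    flattenWord v (finProdFinEquiv (i, t)) = v t i := by
  simp [flattenWord]

theorem flattenWord_symm_apply (ν : Fin (m * k) → Λ) (t : Fin k) (i : Fin m) :
    flattenWord.symm ν t i = ν (finProdFinEquiv (i, t)) :=
  rfl

/-- The blocks in the `m * k` coordinates of a flattened word obtained by copying each of the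
blocks `Ms ℓ` into every row. The copy of `Ms ℓ` in row `i` has index `finProdFinEquiv (i, ℓ)`. -/
def rowBlocks (Ms : Fin n → Finset (Fin k)) (p : Fin (m * n)) : Finset (Fin (m * k)) :=
  (Ms p.modNat).map ((Function.Embedding.sectR p.divNat (Fin k)).trans finProdFinEquiv.toEmbedding)

variable {Ms : Fin n → Finset (Fin k)}

@[simp]
theorem card_rowBlocks (p : Fin (m * n)) : (rowBlocks Ms p).card = (Ms p.modNat).card :=
  card_map _

theorem finProdFinEquiv_mem_rowBlocks {i : Fin m} {t : Fin k} {p : Fin (m * n)} :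
    finProdFinEquiv (i, t) ∈ rowBlocks Ms p ↔ p.divNat = i ∧ t ∈ Ms p.modNat := by
  simp [rowBlocks, and_comm]

theorem disjoint_rowBlocks (hdisj : ∀ ℓ₁ ℓ₂, ℓ₁ ≠ ℓ₂ → Disjoint (Ms ℓ₁) (Ms ℓ₂))
    {p q : Fin (m * n)} (hpq : p ≠ q) : Disjoint (rowBlocks Ms p) (rowBlocks Ms q) := by
  refine disjoint_left.2 (finProdFinEquiv.surjective.forall.2 fun ⟨i, t⟩ hp hq => hpq ?_)
  rw [finProdFinEquiv_mem_rowBlocks] at hp hq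
  have hmod : p.modNat = q.modNat :=
    not_imp_comm.1 (hdisj _ _) (not_disjoint_iff.2 ⟨t, hp.2, hq.2⟩)
  exact finProdFinEquiv.symm.injective (Prod.ext (hp.1.trans hq.1.symm) hmod)

theorem InSubspace.flattenWord_symm {ρ : Fin k → Fin m → Λ} {ν : Fin (m * k) → Λ}
    (h : InSubspace (rowBlocks Ms) (flattenWord ρ) ν) :
    InSubspace Ms ρ (flattenWord.symm ν) := by
  obtain ⟨hfixed, hconst⟩ := h
  constructor
  · intro t ht
    funext i
    rw [flattenWord_symm_apply, hfixed _ fun p hp => ht _ (finProdFinEquiv_mem_rowBlocks.1 hp).2,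
      flattenWord_apply]
  · intro ℓ
    choose a ha using hconst
    refine ⟨fun i => a (finProdFinEquiv (i, ℓ)), fun t ht => funext fun i => ha _ _ ?_⟩
    have hsymm := finProdFinEquiv.symm_apply_apply (i, ℓ)
    rw [finProdFinEquiv_symm_apply, Prod.mk.injEq] at hsymm
    exact finProdFinEquiv_mem_rowBlocks.2 ⟨hsymm.1, hsymm.2.symm ▸ ht⟩

theorem HJEqProp.mul {C : Type*} (h : HJEqProp (Fin m → Λ) C n k) :
    HJEqProp Λ C (m * n) (m * k) := by
  intro d
  obtain ⟨Ms, ρ, hMs, hdisj, hcard, c, hc⟩ := h (d ∘ flattenWord)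
  refine ⟨rowBlocks Ms, flattenWord ρ, fun p => (hMs p.modNat).map,
    fun p q => disjoint_rowBlocks hdisj, fun p q => ?card, c, fun ν hν => ?mono⟩
  case card => simpa only [card_rowBlocks] using hcard p.modNat q.modNat
  case mono => simpa using hc _ hν.flattenWord_symm

end Flatten

theorem f9Star_le_mul_hj_general (Λ C : Type*) [Finite Λ] [Nonempty Λ] [Finite C] (m : ℕ) :
    HJEqProp Λ C m (m * hjNum (Fin m → Λ) C 1) := by
  simpa only [mul_one] using (hjProp_hjNum (Fin m → Λ) C 1).hjEqProp_one.mul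

/-- `f^{9,*}_Λ(m, C) ≤ m · hj_C(1, Λ^m)`, where `Λ^m` is the alphabet of `m`-tuples from `Λ`. -/
theorem f9Star_le_mul_hj (Λ C : Type*) [Fintype Λ] [DecidableEq Λ] [Nonempty Λ]
    [Fintype C] [Nonempty C] (m : ℕ) (hm : 0 < m) (hdvd : Fintype.card Λ ∣ m) :
    f9Star Λ C m ≤ m * hjNum (Fin m → Λ) C 1 :=
  Nat.sInf_le ⟨hdvd.mul_right _, (f9Star_le_mul_hj_general Λ C m).f9StarProp⟩
end

section
/- Let Λ and C be finite non-empty sets and let m* be a positive integer satisfying property (⊕). Then hj_C(1,Λ) ≤ f^{8,*}_Λ(m*, C). -/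
open Finset

/-!
A coloring that is constant on the points of a subspace having equal letter counts factors, on that
subspace, through a coloring of `Ω`. Property `(⊕)` for that coloring yields `ℓ*` and `⟨ℓ*_α⟩`;
distribute the `m*` blocks into `ℓ*` moving ones and, for each `α`, `ℓ*_α` ones fixed at `α`. This
is a line whose point at `α` has letter counts `ℓ̄^α`, so it is monochromatic. As `sInf ∅ = 0`, one
also needs that `f^{8,*}` is attained, which is the multidimensional Hales-Jewett theorem.
-/

open Combinatorics

section LetterCount

variable {ι κ Λ C : Type*} [Fintype ι] [DecidableEq κ] [DecidableEq Λ]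

/-- The number of occurrences of each letter in the word `x : ι → κ`. For words indexed by the
blocks of a subspace it plays the role of `blockCount`. -/
def letterCount (x : ι → κ) (a : κ) : ℕ := #{i | x i = a}

theorem exists_letterCount_eq [Fintype κ] (n : κ → ℕ) (hn : ∑ a, n a = Fintype.card ι) :
    ∃ x : ι → κ, letterCount x = n := by
  have e : ι ≃ Σ a, Fin (n a) := Fintype.equivOfCardEq (by simp [hn])
  refine ⟨fun i => (e i).1, funext fun a => ?_⟩
  calc letterCount (fun i => (e i).1) a
      = Fintype.card {i // (e i).1 = a} := (Fintype.card_subtype _).symm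
    _ = Fintype.card {p : Σ a, Fin (n a) // p.1 = a} :=
        Fintype.card_congr (e.subtypeEquiv fun _ => Iff.rfl)
    _ = Fintype.card (Fin (n a)) := Fintype.card_congr (Equiv.sigmaSubtype a)
    _ = n a := Fintype.card_fin _

theorem letterCount_line (l : Line Λ ι) (a : Λ) :
    letterCount (l a) = Function.update (fun b => letterCount l.idxFun (some b)) a
      (letterCount l.idxFun (some a) + letterCount l.idxFun none) := by
  classical
  funext b
  obtain rfl | hba := eq_or_ne b a
  · have hdisj : Disjoint ({i | l.idxFun i = some b} : Finset ι)
        ({i | l.idxFun i = none} : Finset ι) :=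
      disjoint_filter.2 fun i _ hi => by simp [hi]
    rw [Function.update_self, letterCount, letterCount, letterCount,
      ← card_union_of_disjoint hdisj, ← filter_or]
    refine congrArg card (filter_congr fun i _ => ?_)
    cases hi : l.idxFun i <;> simp [hi]
  · rw [Function.update_of_ne hba]
    refine congrArg card (filter_congr fun i _ => ?_)
    cases hi : l.idxFun i <;> simp [hi, hba.symm]

theorem exists_line_letterCount_eq_update [Fintype Λ] {r : ℕ} (hr : 0 < r) (n : Λ → ℕ)
    (hn : r + ∑ a, n a = Fintype.card ι) :
    ∃ l : Line Λ ι, ∀ a, letterCount (l a) = Function.update n a (n a + r) := by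
  obtain ⟨w, hw⟩ := exists_letterCount_eq (ι := ι) (fun o : Option Λ => o.elim r n)
    (by simpa [Fintype.sum_option] using hn)
  have hnone : letterCount w none = r := congrFun hw none
  have hsome (b : Λ) : letterCount w (some b) = n b := congrFun hw (some b)
  obtain ⟨i, hi⟩ : ({i | w i = none} : Finset ι).Nonempty := card_pos.1 (hr.trans_eq hnone.symm)
  exact ⟨⟨w, i, by simpa using hi⟩, fun a => by simp [letterCount_line, hnone, hsome]⟩

theorem sum_update_add {M : Type*} [Fintype κ] [AddCommMonoid M] (f : κ → M) (a : κ) (r : M) :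
    ∑ b, Function.update f a (f a + r) b = r + ∑ b, f b := by
  rw [sum_update_of_mem (mem_univ a), ← add_sum_erase _ f (mem_univ a), sdiff_singleton_eq_erase]
  abel

theorem OplusProp.exists_line_isMono [Fintype Λ] [Nonempty Λ]
    (hoplus : OplusProp Λ C (Fintype.card ι)) {d : (ι → Λ) → C}
    (hd : d.FactorsThrough letterCount) : ∃ l : Line Λ ι, l.IsMono d := by
  obtain ⟨a₀⟩ := ‹Nonempty Λ›
  have : Nonempty C := ⟨d fun _ => a₀⟩
  obtain ⟨e, rfl⟩ := (Function.factorsThrough_iff d).1 hd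
  obtain ⟨r, hr, n, hsum, c, hc⟩ := hoplus e
  obtain ⟨l, hl⟩ := exists_line_letterCount_eq_update hr n (sum_update_add n a₀ r ▸ hsum a₀)
  exact ⟨l, c, fun a => by rw [Function.comp_apply, hl, hc]⟩

end LetterCount

section SubspaceBlocks

variable {η ι Λ C : Type*} [Fintype ι] [DecidableEq η] [DecidableEq Λ] {k m : ℕ}

/-- The blocks `M_ℓ` of a combinatorial subspace: the sets of coordinates moving in each
direction. They turn Mathlib's subspaces into the pairs of blocks and `ρ` of `InSubspace`. -/
def subspaceBlocks (S : Subspace η Λ ι) (ℓ : η) : Finset ι :=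
  {t | S.idxFun t = Sum.inr ℓ}

theorem mem_subspaceBlocks {S : Subspace η Λ ι} {ℓ : η} {t : ι} :
    t ∈ subspaceBlocks S ℓ ↔ S.idxFun t = Sum.inr ℓ := by
  simp [subspaceBlocks]

theorem subspaceBlocks_nonempty (S : Subspace η Λ ι) (ℓ : η) :
    (subspaceBlocks S ℓ).Nonempty :=
  (S.proper ℓ).imp fun _ => mem_subspaceBlocks.2

theorem disjoint_subspaceBlocks (S : Subspace η Λ ι) {ℓ₁ ℓ₂ : η} (h : ℓ₁ ≠ ℓ₂) :
    Disjoint (subspaceBlocks S ℓ₁) (subspaceBlocks S ℓ₂) := by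
  refine disjoint_left.2 fun t h₁ h₂ => h (Sum.inr.inj (α := Λ) ?_)
  exact (mem_subspaceBlocks.1 h₁).symm.trans (mem_subspaceBlocks.1 h₂)

theorem exists_subspaceBlocks_eq {Ms : η → Finset ι} (hne : ∀ ℓ, (Ms ℓ).Nonempty)
    (hdisj : ∀ ℓ₁ ℓ₂, ℓ₁ ≠ ℓ₂ → Disjoint (Ms ℓ₁) (Ms ℓ₂)) (ρ : ι → Λ) :
    ∃ S : Subspace η Λ ι,
      subspaceBlocks S = Ms ∧ ∀ t a, S.idxFun t = Sum.inl a → ρ t = a := by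
  classical
  let w (t : ι) : Λ ⊕ η := if h : ∃ ℓ, t ∈ Ms ℓ then Sum.inr h.choose else Sum.inl (ρ t)
  have hw (t : ι) (ℓ : η) : w t = Sum.inr ℓ ↔ t ∈ Ms ℓ := by
    by_cases h : ∃ ℓ, t ∈ Ms ℓ
    · simp only [w, dif_pos h, Sum.inr.injEq]
      refine ⟨fun heq => heq ▸ h.choose_spec, fun ht => ?_⟩
      by_contra hℓ
      exact disjoint_left.1 (hdisj _ _ hℓ) h.choose_spec ht
    · simpa [w, dif_neg h] using fun ht => h ⟨ℓ, ht⟩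
  refine ⟨⟨w, fun ℓ => (hne ℓ).imp fun t => (hw t ℓ).2⟩, ?_, fun t a ht => ?_⟩
  · ext ℓ t
    exact mem_subspaceBlocks.trans (hw t ℓ)
  · by_cases h : ∃ ℓ, t ∈ Ms ℓ <;> simp_all [w]

theorem inSubspace_subspaceBlocks_iff {S : Subspace (Fin m) Λ (Fin k)} {ρ ν : Fin k → Λ}
    (hρ : ∀ t a, S.idxFun t = Sum.inl a → ρ t = a) :
    InSubspace (subspaceBlocks S) ρ ν ↔ ∃ x, S x = ν := by
  constructor
  · rintro ⟨hfix, hconst⟩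
    choose x hx using hconst
    refine ⟨x, funext fun t => ?_⟩
    cases ht : S.idxFun t with
    | inl a => rw [Subspace.apply_inl ht, hfix t (by simp [mem_subspaceBlocks, ht]), hρ t a ht]
    | inr ℓ => rw [Subspace.apply_inr ht, hx ℓ t (mem_subspaceBlocks.2 ht)]
  · rintro ⟨x, rfl⟩
    refine ⟨fun t ht => ?_,
      fun ℓ => ⟨x ℓ, fun t ht => Subspace.apply_inr (mem_subspaceBlocks.1 ht)⟩⟩
    cases h : S.idxFun t with
    | inl a => rw [Subspace.apply_inl h, hρ t a h]
    | inr ℓ => exact absurd (mem_subspaceBlocks.2 h) (ht ℓ)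

theorem blockCount_subspaceBlocks (S : Subspace (Fin m) Λ (Fin k)) (x : Fin m → Λ) :
    blockCount (subspaceBlocks S) (S x) = letterCount x := by
  funext a
  refine congrArg card (filter_congr fun ℓ _ => ⟨fun h => ?_, fun h t ht => ?_⟩)
  · obtain ⟨t, ht⟩ := subspaceBlocks_nonempty S ℓ
    rw [← h t ht, Subspace.apply_inr (mem_subspaceBlocks.1 ht)]
  · rw [Subspace.apply_inr (mem_subspaceBlocks.1 ht), h]

theorem f8StarProp_iff [Nonempty Λ] :
    F8StarProp Λ C m k ↔ ∀ d : (Fin k → Λ) → C, ∃ S : Subspace (Fin m) Λ (Fin k),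
      Function.FactorsThrough (fun x => d (S x)) letterCount := by
  refine forall_congr' fun d => ⟨?_, ?_⟩
  · rintro ⟨Ms, ρ, hne, hdisj, hd⟩
    obtain ⟨S, rfl, hρ⟩ := exists_subspaceBlocks_eq hne hdisj ρ
    have hmem (x : Fin m → Λ) : InSubspace (subspaceBlocks S) ρ (S x) :=
      (inSubspace_subspaceBlocks_iff hρ).2 ⟨x, rfl⟩
    refine ⟨S, fun x y hxy => hd _ _ (hmem x) (hmem y) fun a => ?_⟩
    rw [blockCount_subspaceBlocks, blockCount_subspaceBlocks, hxy]
  · rintro ⟨S, hS⟩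
    obtain ⟨a₀⟩ := ‹Nonempty Λ›
    refine ⟨subspaceBlocks S, S fun _ => a₀, subspaceBlocks_nonempty S,
      fun _ _ => disjoint_subspaceBlocks S, fun ν₁ ν₂ hν₁ hν₂ hcount => ?_⟩
    have hmem {ν : Fin k → Λ} := inSubspace_subspaceBlocks_iff (S := S) (ν := ν)
      (ρ := S fun _ => a₀) fun _ _ => Subspace.apply_inl
    obtain ⟨x, rfl⟩ := hmem.1 hν₁
    obtain ⟨y, rfl⟩ := hmem.1 hν₂
    simp only [blockCount_subspaceBlocks] at hcount
    exact hS (funext hcount)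

end SubspaceBlocks

theorem hjProp_iff {Λ C : Type*} [Nonempty Λ] {m k : ℕ} :
    HJProp Λ C m k ↔ ∀ d : (Fin k → Λ) → C, ∃ S : Subspace (Fin m) Λ (Fin k), S.IsMono d := by
  classical
  refine forall_congr' fun d => ⟨?_, ?_⟩
  · rintro ⟨Ms, ρ, hne, hdisj, c, hc⟩
    obtain ⟨S, rfl, hρ⟩ := exists_subspaceBlocks_eq hne hdisj ρ
    exact ⟨S, c, fun x => hc _ ((inSubspace_subspaceBlocks_iff hρ).2 ⟨x, rfl⟩)⟩
  · rintro ⟨S, c, hc⟩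
    obtain ⟨a₀⟩ := ‹Nonempty Λ›
    refine ⟨subspaceBlocks S, S fun _ => a₀, subspaceBlocks_nonempty S,
      fun _ _ => disjoint_subspaceBlocks S, c, fun ν hν => ?_⟩
    obtain ⟨x, rfl⟩ := (inSubspace_subspaceBlocks_iff fun _ _ => Subspace.apply_inl).1 hν
    exact hc x

theorem exists_f8StarProp (Λ C : Type*) [Finite Λ] [DecidableEq Λ] [Nonempty Λ] [Finite C]
    (m : ℕ) : ∃ k, F8StarProp Λ C m k := by
  obtain ⟨k, hk⟩ := Subspace.exists_mono_in_high_dimension_fin Λ C (Fin m)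
  refine ⟨k, f8StarProp_iff.2 fun d => ?_⟩
  obtain ⟨S, c, hc⟩ := hk d
  exact ⟨S, fun x y _ => (hc x).trans (hc y).symm⟩

/-- The line traced out in a subspace by a line of its parameter space; it moves in the coordinates
belonging to the directions in which `l` moves. -/
def subspaceCompLine {η ι Λ : Type*} (S : Subspace η Λ ι) (l : Line Λ η) : Line Λ ι where
  idxFun i := (S.idxFun i).elim some l.idxFun
  proper := by
    obtain ⟨e, he⟩ := l.proper
    obtain ⟨i, hi⟩ := S.proper e
    exact ⟨i, by rw [hi, Sum.elim_inr, he]⟩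

theorem subspaceCompLine_apply {η ι Λ : Type*} (S : Subspace η Λ ι) (l : Line Λ η) (a : Λ) :
    subspaceCompLine S l a = S (l a) := by
  funext i
  cases hi : S.idxFun i <;> simp [subspaceCompLine, Subspace.apply_def, hi]

theorem F8StarProp.hjProp_one {Λ C : Type*} [Fintype Λ] [DecidableEq Λ] [Nonempty Λ] {m k : ℕ}
    (h : F8StarProp Λ C m k) (hoplus : OplusProp Λ C m) : HJProp Λ C 1 k := by
  refine hjProp_iff.2 fun d => ?_
  obtain ⟨S, hS⟩ := f8StarProp_iff.1 h d
  rw [← Fintype.card_fin m] at hoplus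
  obtain ⟨l, c, hc⟩ := hoplus.exists_line_isMono hS
  have hl : (subspaceCompLine S l).IsMono d :=
    ⟨c, fun a => (congrArg d (subspaceCompLine_apply S l a)).trans (hc a)⟩
  exact ⟨(subspaceCompLine S l).toSubspaceUnit.reindex finOneEquiv.symm (.refl Λ) (.refl _),
    Subspace.reindex_isMono.2 hl.toSubspaceUnit⟩

/-- If the positive integer `m*` satisfies property `(⊕)`, then `hj_C(1, Λ) ≤ f^{8,*}_Λ(m*, C)`. -/
theorem hj_le_f8Star_of_oplus (Λ C : Type*) [Fintype Λ] [DecidableEq Λ] [Nonempty Λ]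
    [Fintype C] [Nonempty C] (mstar : ℕ) (hmstar : 0 < mstar)
    (hoplus : OplusProp Λ C mstar) :
    hjNum Λ C 1 ≤ f8Star Λ C mstar := by
  have hmem : F8StarProp Λ C mstar (f8Star Λ C mstar) := Nat.sInf_mem (exists_f8StarProp Λ C mstar)
  exact Nat.sInf_le (hmem.hjProp_one hoplus)
end

section
/- Let Λ and C be finite non-empty sets. Then m* = |Λ|² · w_C(|Λ|, 1) satisfies property (⊕). -/
open Finset

/-! Summing the letters of a word over the alphabet `{0, …, m}^h` sends Hales-Jewett lines to
homothetic copies of the cube, whence the Gallai-Witt numbers exist. For `(⊕)`, fix a letter `α₀`.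
A tuple with sum `M` is determined by its entries off `α₀`, so a coloring of these tuples can be
read as a coloring of all small tuples, ignoring the entry at `α₀`. If the latter is constant on the
cube of scale `D` based at `ms`, then `ℓ* = D` and the completion `ℓ̄*` of `ms` to sum `M - D` work:
`ℓ̄^α` is the completion to sum `M` of the vertex of the cube in direction `α`, also for
`α = α₀`. -/

theorem exists_sum_line_eq_add_nsmul {α ι N : Type*} [Fintype ι] [AddCommMonoid N]
    (l : Combinatorics.Line α ι) (f : α → N) :
    ∃ a > 0, ∃ b, ∀ x, ∑ i, f (l x i) = b + a • f x := by
  classical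
  let active : Finset ι := {i | l.idxFun i = none}
  have active_nonempty : active.Nonempty := by
    obtain ⟨i, hi⟩ := l.proper
    exact ⟨i, mem_filter_univ i |>.2 hi⟩
  refine ⟨#active, active_nonempty.card_pos,
    ∑ i ∈ activeᶜ, ((l.idxFun i).map f).getD 0, fun x => ?_⟩
  have sum_active : ∑ i ∈ active, f (l x i) = #active • f x :=
    sum_eq_card_nsmul fun i hi => by rw [l.apply_none x i ((mem_filter_univ i).1 hi)]
  have sum_inactive :
      ∑ i ∈ activeᶜ, f (l x i) = ∑ i ∈ activeᶜ, ((l.idxFun i).map f).getD 0 := by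
    refine sum_congr rfl fun i hi => ?_
    obtain ⟨y, hy⟩ : ∃ y, l.idxFun i = some y := by
      simpa [active, Option.ne_none_iff_exists'] using hi
    rw [l.apply_some hy, hy, Option.map_some, Option.getD_some]
  rw [← sum_active, ← sum_inactive, sum_compl_add_sum]

theorem exists_gwProp (C : Type*) [Finite C] (h m : ℕ) : ∃ n, GWProp C h m n := by
  obtain ⟨ι, _, exists_mono_line⟩ :=
    Combinatorics.Line.exists_mono_in_high_dimension (Fin h → Fin (m + 1)) C
  refine ⟨Fintype.card ι * m + 1, fun d => ?_⟩
  let toTuple (x : Fin h → Fin (m + 1)) (e : Fin h) : ℕ := x e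
  have sum_lt (w : ι → Fin h → Fin (m + 1)) (e : Fin h) :
      (∑ i, toTuple (w i)) e < Fintype.card ι * m + 1 := by
    rw [Finset.sum_apply, Nat.lt_succ_iff]
    exact sum_le_card_nsmul _ _ _ fun i _ => (w i e).is_le
  obtain ⟨l, c, hl⟩ := exists_mono_line fun w => d fun e => ⟨(∑ i, toTuple (w i)) e, sum_lt w e⟩
  obtain ⟨d', d'_pos, ms, sum_line⟩ := exists_sum_line_eq_add_nsmul l toTuple
  refine ⟨d', d'_pos, ms, fun e => ?_, c, fun i hi hlt => ?_⟩
  · simpa only [sum_line, toTuple, Pi.add_apply, Pi.smul_apply, smul_eq_mul, Fin.val_last]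
      using sum_lt (l fun _ => Fin.last m) e
  · rw [← hl fun e => ⟨i e, Nat.lt_succ_of_le (hi e)⟩]
    simp only [sum_line, toTuple, Pi.add_apply, Pi.smul_apply, smul_eq_mul]

theorem gwProp_gwNum (C : Type*) [Finite C] (h m : ℕ) : GWProp C h m (gwNum C h m) :=
  Nat.sInf_mem (exists_gwProp C h m)

theorem GWProp.exists_mono_homothetic_cube {C ι : Type*} [Fintype ι] {m n : ℕ}
    (hgw : GWProp C (Fintype.card ι) m n) (d : (ι → ℕ) → C) :
    ∃ d' > 0, ∃ ms : ι → ℕ, (∀ β, ms β + d' * m < n) ∧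
      ∃ c, ∀ i : ι → ℕ, (∀ β, i β ≤ m) → d (ms + d' • i) = c := by
  let e := Fintype.equivFin ι
  obtain ⟨d', d'_pos, ms, hms, c, hc⟩ := hgw fun x => d fun β => x (e β)
  refine ⟨d', d'_pos, ms ∘ e, fun β => hms (e β), c, fun i hi => ?_⟩
  have hlt (k) : ms k + d' * i (e.symm k) < n :=
    (Nat.add_le_add_left (Nat.mul_le_mul_left d' (hi _)) _).trans_lt (hms k)
  rw [← hc (i ∘ e.symm) (fun k => hi _) hlt]
  congr 1
  ext β
  simp

section TupleWithSum

variable {ι : Type*} [Fintype ι] [DecidableEq ι]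

/-- The tuple with sum `M` that agrees with `x` off `α₀`, through which colorings of the
tuples with sum `M` become colorings of all tuples. The subtraction truncates, so the sum is `M`
only if the entries of `x` off `α₀` add up to at most `M`. -/
def tupleWithSum (α₀ : ι) (M : ℕ) (x : ι → ℕ) : ι → ℕ :=
  Function.update x α₀ (M - ∑ β ∈ univ.erase α₀, x β)

theorem sum_tupleWithSum {α₀ : ι} {M : ℕ} {x : ι → ℕ} (hx : ∑ β ∈ univ.erase α₀, x β ≤ M) :
    ∑ β, tupleWithSum α₀ M x β = M := by
  rw [tupleWithSum, sum_update_of_mem (mem_univ α₀), sdiff_singleton_eq_erase,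
    Nat.sub_add_cancel hx]

theorem eq_tupleWithSum {α₀ : ι} {M : ℕ} {x y : ι → ℕ} (sum_y : ∑ β, y β = M)
    (hxy : ∀ β ≠ α₀, y β = x β) : y = tupleWithSum α₀ M x := by
  refine Function.eq_update_iff.2 ⟨?_, hxy⟩
  rw [← sum_y, ← add_sum_erase _ y (mem_univ α₀),
    sum_congr rfl fun β hβ => hxy β (ne_of_mem_erase hβ), Nat.add_sub_cancel]

end TupleWithSum

theorem sum_update_add_self {ι N : Type*} [Fintype ι] [DecidableEq ι] [AddCommMonoid N]
    (x : ι → N) (α : ι) (k : N) :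
    ∑ β, Function.update x α (x α + k) β = ∑ β, x β + k := by
  rw [sum_update_of_mem (mem_univ α), sdiff_singleton_eq_erase, add_right_comm,
    add_sum_erase _ x (mem_univ α)]

theorem GWProp.oplusProp {Λ C : Type*} [Fintype Λ] [DecidableEq Λ] [Nonempty Λ] {n M : ℕ}
    (hgw : GWProp C (Fintype.card Λ) 1 n) (hM : Fintype.card Λ * n ≤ M) : OplusProp Λ C M := by
  intro d
  obtain ⟨α₀⟩ := ‹Nonempty Λ›
  obtain ⟨D, D_pos, ms, hms, c, hc⟩ :=
    hgw.exists_mono_homothetic_cube fun x => d (tupleWithSum α₀ M x)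
  have sum_add_D_le : ∑ β ∈ univ.erase α₀, ms β + D ≤ M :=
    calc ∑ β ∈ univ.erase α₀, ms β + D
        ≤ ∑ β ∈ univ.erase α₀, (ms β + D) + (ms α₀ + D) := by
          gcongr <;> omega
      _ = ∑ β, (ms β + D) := sum_erase_add _ _ (mem_univ α₀)
      _ ≤ Fintype.card Λ * n := sum_le_card_nsmul _ _ _ fun β _ => by linarith [hms β]
      _ ≤ M := hM
  let ls := tupleWithSum α₀ (M - D) ms
  have sum_update (α : Λ) : ∑ β, Function.update ls α (ls α + D) β = M := by
    rw [sum_update_add_self, sum_tupleWithSum (by omega)]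
    omega
  refine ⟨D, D_pos, ls, sum_update, c, fun α => ?_⟩
  have update_eq : Function.update ls α (ls α + D) =
      tupleWithSum α₀ M (ms + D • Pi.single α 1) := by
    refine eq_tupleWithSum (sum_update α) fun β hβ => ?_
    have ls_β : ls β = ms β := Function.update_of_ne hβ _ _
    obtain rfl | hβα := eq_or_ne β α
    · simp [ls_β]
    · simp [ls_β, hβα]
  rw [update_eq]
  exact hc _ fun β => by rw [Pi.single_apply]; split_ifs <;> omega

theorem oplus_of_gw_general (Λ C : Type*) [Fintype Λ] [DecidableEq Λ] [Nonempty Λ] [Finite C]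
    {M : ℕ} (hM : Fintype.card Λ * gwNum C (Fintype.card Λ) 1 ≤ M) : OplusProp Λ C M :=
  (gwProp_gwNum C (Fintype.card Λ) 1).oplusProp hM

/-- `m* = |Λ|² · w_C(|Λ|, 1)` satisfies property `(⊕)`. -/
theorem oplus_of_gw (Λ C : Type*) [Fintype Λ] [DecidableEq Λ] [Nonempty Λ]
    [Fintype C] [Nonempty C] :
    OplusProp Λ C (Fintype.card Λ ^ 2 * gwNum C (Fintype.card Λ) 1) :=
  oplus_of_gw_general Λ C (Nat.mul_le_mul_right _ (Nat.le_self_pow two_ne_zero _))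
end
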